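/- arXiv:1001.0304 — 6 statements merged into one kernel-verified Lean document; each statement's English description precedes it below -/
import Mathlib

section
/- Let $A_1,\ldots,A_m$ be real $n\times n$ matrices and let $\mathbf{A} = \{\sum_{k=1}^m q_k A_k : q \in S_m\}$ where $S_m = \{q \in \mathbb{R}^m : \sum_i q_i = 1,\ q_i \ge 0\}$. Suppose $\mathbf{A}$ contains at least one Hurwitz stable matrix. For $q \in S_m$ write $f_{A(q)}(s) = \det(sI_n - \sum_k q_k A_k) = s^n + a_{n-1}(q)s^{n-1} + \cdots + a_0(q)$, and let $\Delta_{n-1}(q)$ be the $(n-1)$-th leading principal minor of the Hurwitz matrix of $f_{A(q)}$. Then every matrix in $\mathbf{A}$ is Hurwitz stable if and only if $\Delta_{n-1}(q) > 0$ and $a_0(q) > 0$ for all $q \in S_m$. -/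
/-!
Let `f` have degree `n = k + 1`. A row vector `u` is a polynomial `U` of degree less than `k`, and
`u` times the leading `k × k` block of the Hurwitz matrix of `f` lists the odd coefficients of
`f U`. Hence `Δ_{n-1} = 0` iff `f U` is even for some such `U ≠ 0`
(`det_hurwitzBlock_eq_zero_iff`). This has two consequences.

* If `f` is stable, then `f(x)` and `f(-x)` are coprime, so evenness of `f U` forces
  `f(-x) ∣ U(x)`, which is impossible by degree: `Δ_{n-1} ≠ 0` (`StablePoly.det_ne_zero`).
* If `f = (x² + ω²) h` with `ω ≠ 0`, then `U(x) = h(-x)` shows `Δ_{n-1} = 0`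
  (`det_eq_zero_of_imaginary_root`).

Positivity of `Δ_{n-1}` and `a₀` for a stable matrix `A` follows by continuity along the stable
matrices `t A - (1 - t) I`, whose characteristic polynomial at `t = 0` is `(x + 1) ^ n`; there
`Δ_{n-1} > 0` by induction on `n`, through the stable polynomials `(ε x + 1) (x + 1) ^ n` with
`ε → 0` (`det_pos_X_add_one_pow`).

Conversely, if `Δ_{n-1} > 0` and `a₀ > 0` on the simplex, no member of the polytope has an eigenvalue
on the imaginary axis. The unstable members then form a set that is closed (eigenvalues are
bounded, so a limit of eigenvalues in the closed right half-plane exists) and open (an eigenvalue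
in the open right half-plane persists), so by connectedness it is empty
(`stable_of_connected`).
-/

open Polynomial Matrix

/-- The `n × n` Hurwitz matrix of a real polynomial `f = a_n x^n + ⋯ + a_0`:
its `(i,j)` entry (with `1`-based indices) is `a_{n - 2j + i}`, with the convention
that `a_k = 0` for `k < 0` or `k > n`. Here `i j : Fin n` are `0`-based. -/
noncomputable def hurwitzMatrix (n : ℕ) (f : Polynomial ℝ) : Matrix (Fin n) (Fin n) ℝ :=
  fun i j =>
    let e : ℤ := (n : ℤ) - 2 * ((j : ℕ) + 1) + ((i : ℕ) + 1)
    if 0 ≤ e ∧ e ≤ (n : ℤ) then f.coeff e.toNat else 0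

/-- The `k`-th leading principal minor of a square matrix. -/
noncomputable def leadingPrincipalMinor {n : ℕ} (M : Matrix (Fin n) (Fin n) ℝ)
    (k : ℕ) (hk : k ≤ n) : ℝ :=
  (M.submatrix (Fin.castLE hk) (Fin.castLE hk)).det

/-- A real matrix is Hurwitz stable if all of its complex eigenvalues (i.e. the roots of
its characteristic polynomial over `ℂ`) have negative real part. -/
def IsHurwitzStable {n : ℕ} (A : Matrix (Fin n) (Fin n) ℝ) : Prop :=
  ∀ μ : ℂ, ((A.charpoly).map (algebraMap ℝ ℂ)).IsRoot μ → μ.re < 0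

/-! ### Singularity of the Hurwitz block -/

/-- A real polynomial all of whose complex roots lie in the open left half-plane. -/
def StablePoly (f : ℝ[X]) : Prop := ∀ μ : ℂ, aeval μ f = 0 → μ.re < 0

/-- The `k × k` leading block of the Hurwitz matrix of a polynomial of formal degree `k + 1`:
with `0`-based indices its `(i, j)` entry is the coefficient of index `k - 2j + i`. -/
noncomputable def hurwitzBlock (k : ℕ) (f : ℝ[X]) : Matrix (Fin k) (Fin k) ℝ :=
  fun i j => if 2 * (j : ℕ) ≤ k + i then f.coeff (k + i - 2 * j) else 0

lemma leadingPrincipalMinor_hurwitz (k : ℕ) (f : ℝ[X]) (hf : f.natDegree ≤ k + 1)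
    (h : k + 1 - 1 ≤ k + 1) :
    leadingPrincipalMinor (hurwitzMatrix (k + 1) f) (k + 1 - 1) h = (hurwitzBlock k f).det := by
  change (submatrix (hurwitzMatrix (k + 1) f) (Fin.castLE (n := k) h) (Fin.castLE (n := k) h)).det
    = _
  congr 1
  ext i j
  simp only [submatrix_apply, hurwitzMatrix, hurwitzBlock, Fin.val_castLE]
  by_cases h1 : 2 * (j : ℕ) ≤ k + i
  · rw [if_pos h1]
    have e : (((k + 1 : ℕ) : ℤ) - 2 * (((j : ℕ) : ℤ) + 1) + (((i : ℕ) : ℤ) + 1)).toNat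
        = k + i - 2 * j := by omega
    by_cases h2 : k + (i : ℕ) - 2 * j ≤ k + 1
    · rw [if_pos (by omega), e]
    · rw [if_neg (by omega), coeff_eq_zero_of_natDegree_lt (by omega)]
  · rw [if_neg h1, if_neg (by omega)]

/-- The polynomial of degree less than `k` whose coefficients, from the top down, are the
entries of `u`. -/
noncomputable def rowPoly (k : ℕ) (u : Fin k → ℝ) : ℝ[X] := ∑ i : Fin k, C (u i) * X ^ (k - 1 - (i : ℕ))

lemma coeff_rowPoly (k : ℕ) (u : Fin k → ℝ) (i : Fin k) :
    (rowPoly k u).coeff (k - 1 - i) = u i := by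
  rw [rowPoly, finsetSum_coeff, Finset.sum_eq_single i]
  · simp
  · intro b _ hb
    rw [coeff_C_mul_X_pow, if_neg]
    have : (b : ℕ) ≠ i := fun h => hb (Fin.ext h)
    omega
  · simp

lemma natDegree_rowPoly_lt (k : ℕ) (hk : 0 < k) (u : Fin k → ℝ) :
    (rowPoly k u).natDegree < k := by
  have : (rowPoly k u).natDegree ≤ k - 1 := by
    apply natDegree_sum_le_of_forall_le
    intro i _
    exact (natDegree_C_mul_X_pow_le _ _).trans (by omega)
  omega

/-- Multiplying the Hurwitz block by a row vector reads off the odd coefficients of a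
product of polynomials. -/
lemma vecMul_hurwitzBlock (k : ℕ) (f : ℝ[X]) (u : Fin k → ℝ) (j : Fin k) :
    (u ᵥ* hurwitzBlock k f) j = (f * rowPoly k u).coeff (2 * (k - 1 - j) + 1) := by
  rw [rowPoly, Finset.mul_sum, finsetSum_coeff, vecMul, dotProduct]
  apply Finset.sum_congr rfl
  intro i _
  rw [mul_left_comm, coeff_C_mul, coeff_mul_X_pow', hurwitzBlock]
  have hi := i.2
  have hj := j.2
  by_cases h : 2 * (j : ℕ) ≤ k + i
  · rw [if_pos h, if_pos (by omega)]
    congr 2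
    omega
  · rw [if_neg h, if_neg (by omega)]

lemma coeff_comp_neg_X' (f : ℝ[X]) (d : ℕ) : (f.comp (-X)).coeff d = f.coeff d * (-1) ^ d := by
  rw [← comp_C_mul_X_coeff]
  simp

/-- The Hurwitz block is singular exactly when `f * U` is even for some nonzero `U` of degree
less than `k`. -/
lemma det_hurwitzBlock_eq_zero_iff (k : ℕ) (f : ℝ[X]) (hf : f.natDegree ≤ k + 1) :
    (hurwitzBlock k f).det = 0 ↔
      ∃ U : ℝ[X], U ≠ 0 ∧ U.natDegree < k ∧ (f * U).comp (-X) = f * U := by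
  rw [← exists_vecMul_eq_zero_iff]
  constructor
  · rintro ⟨u, hu, h⟩
    have hk : 0 < k := by
      rcases Nat.eq_zero_or_pos k with rfl | hk
      · exact absurd (Subsingleton.elim u 0) hu
      · exact hk
    refine ⟨rowPoly k u, ?_, natDegree_rowPoly_lt k hk u, ?_⟩
    · intro h0
      apply hu
      ext i
      rw [← coeff_rowPoly k u i, h0]
      simp
    · ext d
      rw [coeff_comp_neg_X']
      rcases Nat.even_or_odd d with hd | hd
      · simp [hd.neg_one_pow]
      · suffices (f * rowPoly k u).coeff d = 0 by simp [this]
        obtain ⟨e, rfl⟩ := hd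
        by_cases he : e < k
        · have := vecMul_hurwitzBlock k f u ⟨k - 1 - e, by omega⟩
          rw [h] at this
          have e1 : k - 1 - (k - 1 - e) = e := by omega
          simpa [e1] using this.symm
        · apply coeff_eq_zero_of_natDegree_lt
          have := natDegree_rowPoly_lt k hk u
          have := natDegree_mul_le (p := f) (q := rowPoly k u)
          omega
  · rintro ⟨U, hU, hd, h⟩
    have hrow : rowPoly k (fun i => U.coeff (k - 1 - i)) = U := by
      ext d
      by_cases hdk : d < k
      · have := coeff_rowPoly k (fun i => U.coeff (k - 1 - i)) ⟨k - 1 - d, by omega⟩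
        have e1 : k - 1 - (k - 1 - d) = d := by omega
        simpa [e1] using this
      · rw [coeff_eq_zero_of_natDegree_lt (p := U) (by omega), coeff_eq_zero_of_natDegree_lt]
        have := natDegree_rowPoly_lt k (by omega) (fun i => U.coeff (k - 1 - i))
        omega
    refine ⟨fun i => U.coeff (k - 1 - i), ?_, ?_⟩
    · intro h0
      apply hU
      rw [← hrow, h0]
      simp [rowPoly]
    · ext j
      rw [vecMul_hurwitzBlock, hrow]
      have := congrArg (fun p => p.coeff (2 * (k - 1 - j) + 1)) h
      simp only [coeff_comp_neg_X', (odd_two_mul_add_one (k - 1 - (j : ℕ))).neg_one_pow] at this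
      simp only [Pi.zero_apply]
      linarith

lemma StablePoly.det_ne_zero {f : ℝ[X]} (hs : StablePoly f) (k : ℕ) (hf : f.natDegree = k + 1) :
    (hurwitzBlock k f).det ≠ 0 := by
  rw [Ne, det_hurwitzBlock_eq_zero_iff k f hf.le]
  rintro ⟨U, hU, hd, h⟩
  -- A common root of `f(x)` and `f(-x)` would have both negative and positive real part.
  have hcop : IsCoprime (f.comp (-X)) f := by
    rw [isCoprime_iff_aeval_ne_zero_of_isAlgClosed ℝ ℂ]
    intro a
    by_contra! hc
    obtain ⟨h1, h2⟩ := hc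
    have h3 := hs a h2
    have h4 := hs (-a) (by simpa [aeval_comp] using h1)
    simp at h4
    linarith
  have hdvd : f.comp (-X) ∣ U := by
    apply hcop.dvd_of_dvd_mul_left
    rw [← h, mul_comp]
    exact dvd_mul_right _ _
  have := natDegree_le_of_dvd hdvd hU
  rw [natDegree_comp] at this
  simp at this
  omega

/-- A pair of nonzero imaginary roots kills the Hurwitz minor: write `f = (x² + ω²) h` and take
the multiplier `h(-x)`. -/
lemma det_eq_zero_of_imaginary_root {f : ℝ[X]} (k : ℕ) (hf : f.natDegree = k + 1) (μ : ℂ)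
    (hμ : aeval μ f = 0) (hre : μ.re = 0) (him : μ.im ≠ 0) : (hurwitzBlock k f).det = 0 := by
  rw [det_hurwitzBlock_eq_zero_iff k f hf.le]
  obtain ⟨h, hh⟩ := quadratic_dvd_of_aeval_eq_zero_im_ne_zero f hμ him
  have hf0 : f ≠ 0 := by
    rintro rfl
    simp at hf
  rw [hre] at hh
  simp only [mul_zero, map_zero, zero_mul, sub_zero] at hh
  have hh0 : h ≠ 0 := by
    rintro rfl
    simp at hh
    exact hf0 hh
  have hq : (X ^ 2 + C (‖μ‖ ^ 2) : ℝ[X]).natDegree = 2 := natDegree_X_pow_add_C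
  have hq0 : (X ^ 2 + C (‖μ‖ ^ 2) : ℝ[X]) ≠ 0 := by
    intro h0
    rw [h0] at hq
    simp at hq
  have hdeg : f.natDegree = 2 + h.natDegree := by rw [hh, natDegree_mul hq0 hh0, hq]
  refine ⟨h.comp (-X), ?_, ?_, ?_⟩
  · rwa [Ne, comp_neg_X_eq_zero_iff]
  · rw [natDegree_comp]
    simp
    omega
  · rw [hh, mul_comp, mul_comp, comp_neg_X_comp_neg_X]
    simp only [add_comp, X_pow_comp, C_comp, neg_sq]
    ring

/-! ### Positivity for stable matrices -/

/-- Lowering the formal degree: if the top coefficient vanishes, the first column of the block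
has a single nonzero entry. -/
lemma det_hurwitzBlock_succ (k : ℕ) (g : ℝ[X]) (hg : g.natDegree ≤ k + 1) :
    (hurwitzBlock (k + 1) g).det = g.coeff (k + 1) * (hurwitzBlock k g).det := by
  rw [det_succ_column_zero, Finset.sum_eq_single 0]
  · have : (hurwitzBlock (k + 1) g).submatrix (Fin.succAbove 0) Fin.succ = hurwitzBlock k g := by
      ext i j
      change (if 2 * ((j : ℕ) + 1) ≤ k + 1 + ((i : ℕ) + 1) then
        g.coeff (k + 1 + ((i : ℕ) + 1) - 2 * ((j : ℕ) + 1)) else 0) =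
        if 2 * (j : ℕ) ≤ k + i then g.coeff (k + i - 2 * j) else 0
      by_cases h : 2 * (j : ℕ) ≤ k + i
      · rw [if_pos h, if_pos (by omega)]
        congr 1
        omega
      · rw [if_neg h, if_neg (by omega)]
    rw [this]
    simp [hurwitzBlock]
  · intro b _ hb
    have hb' : 0 < (b : ℕ) := Nat.pos_of_ne_zero fun h => hb (Fin.ext h)
    have : hurwitzBlock (k + 1) g b 0 = 0 := by
      simp only [hurwitzBlock, Fin.val_zero, mul_zero, Nat.zero_le, if_true, Nat.sub_zero]
      exact coeff_eq_zero_of_natDegree_lt (by omega)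
    simp [this]
  · simp

lemma continuous_det_hurwitzBlock (k : ℕ) (F : ℝ → ℝ[X])
    (hF : ∀ d, Continuous fun t => (F t).coeff d) :
    Continuous fun t => (hurwitzBlock k (F t)).det := by
  apply Continuous.matrix_det
  apply continuous_matrix
  intro i j
  simp only [hurwitzBlock]
  split_ifs
  · exact hF _
  · exact continuous_const

lemma pos_of_ne_zero_on_Icc {g : ℝ → ℝ} (hg : Continuous g) (h0 : 0 < g 0)
    (hne : ∀ t ∈ Set.Icc (0 : ℝ) 1, g t ≠ 0) : 0 < g 1 := by
  by_contra! h
  obtain ⟨t, ht, h2⟩ := intermediate_value_Icc' zero_le_one hg.continuousOn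
    (show (0 : ℝ) ∈ Set.Icc (g 1) (g 0) from ⟨h, h0.le⟩)
  exact hne t ht h2

lemma det_pos_X_add_one_pow (k : ℕ) : 0 < (hurwitzBlock k ((X + 1 : ℝ[X]) ^ (k + 1))).det := by
  induction k with
  | zero => simp
  | succ k ih =>
    have hdeg : ((X + 1 : ℝ[X]) ^ (k + 1)).natDegree = k + 1 := by
      rw [natDegree_pow, ← C_1, natDegree_X_add_C, mul_one]
    have hmon : ((X + 1 : ℝ[X]) ^ (k + 1)).Monic := by
      rw [← C_1]
      exact (monic_X_add_C 1).pow _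
    -- A factor `ε x + 1` interpolates between `1`, where the degree drops, and `x + 1`.
    have key := pos_of_ne_zero_on_Icc (continuous_det_hurwitzBlock (k + 1)
      (fun ε => (C ε * X + 1) * (X + 1 : ℝ[X]) ^ (k + 1)) ?_) ?_ ?_
    · simpa [pow_succ' _ (k + 1)] using key
    · intro d
      simp only [add_mul, mul_assoc, coeff_add, coeff_C_mul, one_mul]
      fun_prop
    · simp only [map_zero, zero_mul, zero_add, one_mul]
      rw [det_hurwitzBlock_succ k _ hdeg.le]
      have := hmon.coeff_natDegree
      rw [hdeg] at this
      rwa [this, one_mul]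
    · rintro ε ⟨hε0, -⟩
      rcases hε0.eq_or_lt with rfl | hε
      · simp only [map_zero, zero_mul, zero_add, one_mul]
        rw [det_hurwitzBlock_succ k _ hdeg.le]
        have := hmon.coeff_natDegree
        rw [hdeg] at this
        rw [this, one_mul]
        exact ih.ne'
      · have hl : (C ε * X + 1 : ℝ[X]).natDegree = 1 := by
          rw [← C_1]
          exact natDegree_linear hε.ne'
        refine StablePoly.det_ne_zero ?_ _ ?_
        · intro μ hμ
          simp only [map_mul, map_add, map_pow, aeval_X, aeval_C, map_one, mul_eq_zero,
            Complex.coe_algebraMap] at hμ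
          rcases hμ with h | h
          · have h1 := congrArg Complex.re h
            simp at h1
            by_contra! h2
            nlinarith
          · have h1 := congrArg Complex.re (eq_zero_of_pow_eq_zero h)
            simp at h1
            linarith
        · rw [natDegree_mul (fun h => by simp [h] at hl) hmon.ne_zero, hl, hdeg]
          ring

lemma aeval_charpoly_eq_det {n : ℕ} (M : Matrix (Fin n) (Fin n) ℝ) (μ : ℂ) :
    aeval μ M.charpoly = (scalar (Fin n) μ - M.map (algebraMap ℝ ℂ)).det := by
  rw [← eval_charpoly, charpoly_map, eval_map_algebraMap]

lemma isHurwitzStable_iff {n : ℕ} (M : Matrix (Fin n) (Fin n) ℝ) :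
    IsHurwitzStable M ↔ StablePoly M.charpoly := by
  simp [IsHurwitzStable, StablePoly, IsRoot, eval_map_algebraMap]

lemma continuous_charpoly_coeff {n : ℕ} (M : ℝ → Matrix (Fin n) (Fin n) ℝ) (hM : Continuous M)
    (d : ℕ) : Continuous fun t => (M t).charpoly.coeff d := by
  have h : ∀ t, (M t).charpoly.coeff d = MvPolynomial.eval (fun p : Fin n × Fin n => M t p.1 p.2)
      ((charpoly.univ ℝ (Fin n)).coeff d) := by
    intro t
    have := charpoly.univ_coeff_eval₂Hom (Fin n) (RingHom.id ℝ)
      (fun p : Fin n × Fin n => M t p.1 p.2) d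
    exact this.symm
  simp only [h]
  apply (MvPolynomial.continuous_eval _).comp
  fun_prop

/-- The homotopy `t A - (1 - t) I` moves the eigenvalues of a stable matrix to `-1` inside the
open left half-plane. -/
lemma stable_homotopy {n : ℕ} {M : Matrix (Fin n) (Fin n) ℝ} (hM : StablePoly M.charpoly)
    {t : ℝ} (ht : t ∈ Set.Icc (0 : ℝ) 1) : StablePoly (t • M - (1 - t) • 1).charpoly := by
  intro μ hμ
  rw [aeval_charpoly_eq_det] at hμ
  have e1 : scalar (Fin n) μ - (t • M - (1 - t) • (1 : Matrix (Fin n) (Fin n) ℝ)).map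
      (algebraMap ℝ ℂ) = scalar (Fin n) (μ + (1 - t)) - (t : ℂ) • M.map (algebraMap ℝ ℂ) := by
    ext i j
    by_cases hij : i = j <;> simp [hij, one_apply]
    ring
  rw [e1] at hμ
  rcases ht.1.eq_or_lt with rfl | h0
  · simp only [Complex.ofReal_zero, zero_smul, sub_zero, scalar_apply, det_diagonal,
      Finset.prod_const, Finset.card_univ, Fintype.card_fin] at hμ
    have h1 := congrArg Complex.re (eq_zero_of_pow_eq_zero hμ)
    simp at h1
    linarith
  · have htc : (t : ℂ) ≠ 0 := by exact_mod_cast h0.ne'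
    have e2 : scalar (Fin n) (μ + (1 - t)) - (t : ℂ) • M.map (algebraMap ℝ ℂ) =
        (t : ℂ) • (scalar (Fin n) ((μ + (1 - t)) / t) - M.map (algebraMap ℝ ℂ)) := by
      ext i j
      by_cases hij : i = j <;> simp [hij]
      field_simp
    rw [e2, det_smul, mul_eq_zero] at hμ
    have h2 := hM _ ((aeval_charpoly_eq_det M _).trans
      (hμ.resolve_left (pow_ne_zero _ htc)))
    rw [Complex.div_ofReal_re, div_lt_iff₀ h0] at h2
    simp at h2
    linarith [ht.2]

lemma continuous_homotopy {n : ℕ} (M : Matrix (Fin n) (Fin n) ℝ) :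
    Continuous fun t : ℝ => t • M - (1 - t) • (1 : Matrix (Fin n) (Fin n) ℝ) := by
  fun_prop

lemma charpoly_neg_one' (n : ℕ) : (-1 : Matrix (Fin n) (Fin n) ℝ).charpoly = (X + 1) ^ n := by
  have : (-1 : Matrix (Fin n) (Fin n) ℝ) = diagonal fun _ => -1 := by
    rw [← diagonal_one, diagonal_neg]
  rw [this, charpoly_diagonal]
  simp

lemma coeff_zero_pos_of_stable {n : ℕ} {M : Matrix (Fin n) (Fin n) ℝ}
    (hM : StablePoly M.charpoly) : 0 < M.charpoly.coeff 0 := by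
  have key := pos_of_ne_zero_on_Icc (continuous_charpoly_coeff _ (continuous_homotopy M) 0) ?_ ?_
  · simpa using key
  · simp [charpoly_neg_one', coeff_zero_eq_eval_zero]
  · intro t ht h0
    have := stable_homotopy hM ht 0 (by
      rw [← coeff_zero_eq_aeval_zero', h0]
      simp)
    simp at this

lemma det_pos_of_stable {k : ℕ} {M : Matrix (Fin (k + 1)) (Fin (k + 1)) ℝ}
    (hM : StablePoly M.charpoly) : 0 < (hurwitzBlock k M.charpoly).det := by
  have key := pos_of_ne_zero_on_Icc (continuous_det_hurwitzBlock k _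
    (continuous_charpoly_coeff _ (continuous_homotopy M))) ?_ ?_
  · simpa using key
  · simpa [charpoly_neg_one'] using det_pos_X_add_one_pow k
  · intro t ht
    exact (stable_homotopy hM ht).det_ne_zero k (by simp [charpoly_natDegree_eq_dim])

/-! ### Persistence of stability -/

/-- Every eigenvalue of a stable `M` is at distance at least `re μ` from a point `μ` of the right
half-plane, which bounds the characteristic polynomial from below there. -/
lemma norm_ge_of_stable {n : ℕ} {M : Matrix (Fin n) (Fin n) ℝ} (hM : StablePoly M.charpoly)
    (μ : ℂ) (hμ : 0 ≤ μ.re) : μ.re ^ n ≤ ‖aeval μ M.charpoly‖ := by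
  set p := M.charpoly.map (algebraMap ℝ ℂ) with hp
  have hmon : p.Monic := (charpoly_monic M).map _
  have hsp : p.Splits := IsAlgClosed.splits p
  have hcard : Multiset.card p.roots = n := by
    rw [← hsp.natDegree_eq_card_roots, hp, natDegree_map, charpoly_natDegree_eq_dim]
    simp
  rw [← eval_map_algebraMap, ← hp, hsp.eval_eq_prod_roots_of_monic hmon]
  have hn : ‖(p.roots.map fun z => μ - z).prod‖ = (p.roots.map fun z => ‖μ - z‖).prod := by
    have := map_multiset_prod (normHom : ℂ →*₀ ℝ) (p.roots.map fun z => μ - z)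
    rwa [Multiset.map_map] at this
  rw [hn]
  have hle := Multiset.prod_map_le_prod_map₀ (s := p.roots) (fun _ => μ.re) (fun z => ‖μ - z‖)
    (fun _ _ => hμ) ?_
  · simpa [hcard] using hle
  · intro z hz
    have hz' : z.re < 0 := hM z (by
      have := (mem_roots'.1 hz).2
      rwa [hp, IsRoot, eval_map_algebraMap] at this)
    have := Complex.re_le_norm (μ - z)
    simp only [Complex.sub_re] at this
    linarith

attribute [local instance] Matrix.linftyOpNormedRing Matrix.linftyOpNormedAlgebra in
/-- The roots of the characteristic polynomials of a compact family of matrices are uniformly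
bounded. -/
lemma exists_root_bound {n : ℕ} {Y : Type*} [TopologicalSpace Y] [CompactSpace Y]
    (M : Y → Matrix (Fin n) (Fin n) ℝ) (hM : Continuous M) :
    ∃ R : ℝ, ∀ y, ∀ μ : ℂ, aeval μ (M y).charpoly = 0 → ‖μ‖ ≤ R := by
  have hc : Continuous fun y => ‖(M y).map (algebraMap ℝ ℂ)‖ * ‖(1 : Matrix (Fin n) (Fin n) ℂ)‖ :=
      by
    refine Continuous.mul (Continuous.norm ?_) continuous_const
    exact hM.matrix_map (Complex.continuous_ofReal)
  obtain ⟨R, hR⟩ := (isCompact_range hc).bddAbove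
  refine ⟨R, fun y μ hμ => ?_⟩
  refine le_trans ?_ (hR ⟨y, rfl⟩)
  apply spectrum.norm_le_norm_mul_of_mem (𝕜 := ℂ)
  rw [mem_spectrum_iff_isRoot_charpoly, charpoly_map, IsRoot, eval_map_algebraMap, hμ]

lemma continuous_aeval_charpoly {n : ℕ} {Y : Type*} [TopologicalSpace Y]
    (M : Y → Matrix (Fin n) (Fin n) ℝ) (hM : Continuous M) :
    Continuous fun p : Y × ℂ => aeval p.2 (M p.1).charpoly := by
  simp only [aeval_charpoly_eq_det, scalar_apply]
  apply Continuous.matrix_det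
  apply Continuous.sub
  · exact Continuous.matrix_diagonal (by fun_prop)
  · exact (hM.comp continuous_fst).matrix_map Complex.continuous_ofReal

/-- In a connected compact family without imaginary eigenvalues, stability of one member spreads
to all: the unstable members form a clopen set. -/
lemma stable_of_connected {n : ℕ} {Y : Type*} [TopologicalSpace Y] [CompactSpace Y]
    [T2Space Y] [PreconnectedSpace Y] (M : Y → Matrix (Fin n) (Fin n) ℝ) (hM : Continuous M)
    (himag : ∀ y, ∀ μ : ℂ, aeval μ (M y).charpoly = 0 → μ.re ≠ 0)
    (y₀ : Y) (h₀ : StablePoly (M y₀).charpoly) (y : Y) : StablePoly (M y).charpoly := by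
  have hcont := continuous_aeval_charpoly M hM
  have hclosed : IsClosed {y | ¬ StablePoly (M y).charpoly} := by
    obtain ⟨R, hR⟩ := exists_root_bound M hM
    have hK : IsCompact ((Set.univ ×ˢ Metric.closedBall (0 : ℂ) R) ∩
        {p : Y × ℂ | 0 ≤ p.2.re ∧ aeval p.2 (M p.1).charpoly = 0}) := by
      refine (isCompact_univ.prod (isCompact_closedBall _ _)).inter_right ?_
      refine IsClosed.and (isClosed_le continuous_const ?_) (isClosed_eq hcont continuous_const)
      exact Complex.continuous_re.comp continuous_snd
    convert (hK.image continuous_fst).isClosed using 1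
    ext y
    simp only [StablePoly, not_forall, not_lt, Set.mem_ofPred_eq, Set.mem_image, Set.mem_inter_iff,
      Set.mem_prod, Set.mem_univ, true_and, Prod.exists, exists_and_right, exists_eq_right,
      mem_closedBall_zero_iff]
    constructor
    · rintro ⟨μ, h1, h2⟩
      exact ⟨μ, hR y μ h1, h2, h1⟩
    · rintro ⟨μ, -, h2, h1⟩
      exact ⟨μ, h1, h2⟩
  have hopen : IsOpen {y | ¬ StablePoly (M y).charpoly} := by
    rw [isOpen_iff_mem_nhds]
    intro y hy
    simp only [StablePoly, not_forall, not_lt, Set.mem_ofPred_eq] at hy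
    obtain ⟨μ, h1, h2⟩ := hy
    have hpos : 0 < μ.re := lt_of_le_of_ne h2 (himag y μ h1).symm
    have hcμ : Continuous fun z => ‖aeval μ (M z).charpoly‖ :=
      (hcont.comp (Continuous.prodMk_left μ)).norm
    have hev := hcμ.continuousAt.eventually_lt (continuousAt_const (x := y) (y := μ.re ^ n))
      (by simp only [h1, norm_zero]; positivity)
    filter_upwards [hev] with z hz hst
    exact absurd (norm_ge_of_stable hst μ h2) (not_le.2 hz)
  rcases isClopen_iff.1 ⟨hclosed, hopen⟩ with h | h
  · by_contra hy
    exact (Set.eq_empty_iff_forall_notMem.1 h y) hy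
  · exact absurd h₀ ((Set.eq_univ_iff_forall.1 h) y₀)

/-- The polytope of matrices `{∑ qₖ Aₖ : q ∈ Sₘ}` contains a Hurwitz stable matrix.
Then every matrix in the polytope is Hurwitz stable iff `Δ_{n-1}(q) > 0` and `a₀(q) > 0`
for all `q` in the standard simplex. -/
theorem polytope_hurwitz_stable_iff (n m : ℕ) (A : Fin m → Matrix (Fin n) (Fin n) ℝ)
    (hex : ∃ q ∈ stdSimplex ℝ (Fin m), IsHurwitzStable (∑ k, q k • A k)) :
    (∀ q ∈ stdSimplex ℝ (Fin m), IsHurwitzStable (∑ k, q k • A k)) ↔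
      (∀ q ∈ stdSimplex ℝ (Fin m),
        0 < leadingPrincipalMinor (hurwitzMatrix n (∑ k, q k • A k).charpoly) (n - 1)
              (Nat.sub_le n 1) ∧
        0 < ((∑ k, q k • A k).charpoly).coeff 0) := by
  simp only [isHurwitzStable_iff] at hex ⊢
  constructor
  · intro h q hq
    refine ⟨?_, coeff_zero_pos_of_stable (h q hq)⟩
    rcases n with _ | k
    · simp [leadingPrincipalMinor]
    · rw [leadingPrincipalMinor_hurwitz k _ (by simp [charpoly_natDegree_eq_dim])]
      exact det_pos_of_stable (h q hq)
  · intro h q hq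
    obtain ⟨q₀, hq₀, hst⟩ := hex
    have : PreconnectedSpace (stdSimplex ℝ (Fin m)) :=
      isPreconnected_iff_preconnectedSpace.1 (convex_stdSimplex ℝ (Fin m)).isPreconnected
    refine stable_of_connected (Y := stdSimplex ℝ (Fin m))
      (fun q => ∑ k, (q : Fin m → ℝ) k • A k) ?_ ?_ ⟨q₀, hq₀⟩ hst ⟨q, hq⟩
    · refine continuous_finsetSum _ fun k _ => ?_
      have hk : Continuous fun q : stdSimplex ℝ (Fin m) => q.1 k :=
        (continuous_apply k).comp continuous_subtype_val
      exact hk.smul continuous_const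
    rintro ⟨p, hp⟩ μ hμ hre
    obtain ⟨h1, h2⟩ := h p hp
    by_cases him : μ.im = 0
    · have : μ = 0 := Complex.ext hre him
      rw [this, ← coeff_zero_eq_aeval_zero'] at hμ
      simp only [Complex.coe_algebraMap, Complex.ofReal_eq_zero] at hμ
      exact h2.ne' hμ
    · rcases n with _ | k
      · simp [charpoly] at hμ
      · have hd : (∑ i, p i • A i).charpoly.natDegree = k + 1 := by
          simp [charpoly_natDegree_eq_dim]
        rw [leadingPrincipalMinor_hurwitz k _ hd.le] at h1
        exact h1.ne' (det_eq_zero_of_imaginary_root k hd μ hμ hre him)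
end

section
/- Let $A_1,\ldots,A_m$ be real $n\times n$ matrices. For $q \in S_m$ write $f_{A(q)}(s) = \det(sI_n - \sum_k q_k A_k) = s^n + a_{n-1}(q)s^{n-1} + \cdots + a_0(q)$, and let $\Delta_{n-1}(q)$ be the $(n-1)$-th leading principal minor of the Hurwitz matrix of $f_{A(q)}$. If there exists $q^* \in S_m$ such that $\sum_k q^*_k A_k$ is Hurwitz stable, and moreover $\Delta_{n-1}(q) > 0$ and $a_0(q) > 0$ for all $q \in S_m$, then for every $q \in S_m$ the matrix $\sum_{k=1}^m q_k A_k$ is Hurwitz stable. -/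
/-!
The simplex is connected, so it suffices that the set of stable parameters is nonempty, open and
relatively closed. Stability is an open condition on matrices (`isOpen_stable`), because eigenvalues
are bounded by the norm of the matrix and hence cannot escape to infinity. If `A` is stable and
`Re μ > 0`, every factor of `det (μ - A) = ∏ (μ - λᵢ)` has modulus at least `Re μ`, so
`|det (μ - A)| ≥ (Re μ) ^ n`; this bound survives limits, so a limit of stable matrices has no
eigenvalue with positive real part (`closure_stable_subset`). It remains to exclude eigenvalues on
the imaginary axis. The eigenvalue `0` is excluded by `a₀ > 0`. A nonzero imaginary eigenvalue
`i ω` makes `X² + ω²` divide the characteristic polynomial, and then the vector with entries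
`(-ω²) ^ (n - 2 - j)` lies in the kernel of the leading `(n - 1) × (n - 1)` block of the Hurwitz
matrix, since the entries of each row telescope (`hurwitz_minor_eq_zero`); this contradicts
`Δ_{n-1} > 0`.
-/

open Polynomial Matrix

/-- The `(n - 1)`-th Hurwitz minor vanishes for a multiple of `X² + w`. Writing `f = (X² + w) g`, the
coefficients satisfy `a_e = b_{e-2} + w b_e`, so consecutive columns of the Hurwitz matrix telescope
against powers of `-w`. -/
lemma hurwitz_minor_eq_zero (n : ℕ) (f : ℝ[X]) (hf : f.natDegree = n) (hf0 : f ≠ 0) (w : ℝ)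
    (hdvd : X ^ 2 + C w ∣ f) :
    leadingPrincipalMinor (hurwitzMatrix n f) (n - 1) (Nat.sub_le n 1) = 0 := by
  obtain ⟨g, rfl⟩ := hdvd
  have hg0 : g ≠ 0 := right_ne_zero_of_mul hf0
  have hq0 : (X ^ 2 + C w : ℝ[X]) ≠ 0 := left_ne_zero_of_mul hf0
  have hdeg : g.natDegree + 2 = n := by
    rw [natDegree_mul hq0 hg0, natDegree_X_pow_add_C] at hf
    omega
  -- the coefficients of `g`, extended by zero to negative indices
  set b : ℤ → ℝ := fun e => if 0 ≤ e then g.coeff e.toNat else 0 with hb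
  have hbneg : ∀ e : ℤ, e < 0 → b e = 0 := fun e he => by simp [hb, not_le.mpr he]
  have hbbig : ∀ e : ℤ, (n : ℤ) - 2 < e → b e = 0 := by
    intro e he
    by_cases h0 : 0 ≤ e
    · simp only [hb, h0, if_true]
      exact coeff_eq_zero_of_natDegree_lt (by omega)
    · exact hbneg e (by omega)
  have hentry : ∀ e : ℤ, (if 0 ≤ e ∧ e ≤ (n : ℤ) then ((X ^ 2 + C w) * g).coeff e.toNat else 0)
      = b (e - 2) + w * b e := by
    intro e
    split_ifs with h
    · obtain ⟨k, rfl⟩ := Int.eq_ofNat_of_zero_le h.1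
      rw [add_mul, coeff_add, coeff_C_mul]
      congr 1
      rw [coeff_X_pow_mul']
      by_cases hk : 2 ≤ k
      · have h2 : (0 : ℤ) ≤ (k : ℤ) - 2 := by omega
        have h3 : ((k : ℤ) - 2).toNat = k - 2 := by omega
        simp [hb, hk, h3]
      · rw [hbneg _ (by omega)]
        simp [hk]
    · rcases not_and_or.mp h with h | h
      · rw [hbneg _ (by omega), hbneg _ (by omega)]
        simp
      · rw [hbbig _ (by omega), hbbig _ (by omega)]
        simp
  unfold leadingPrincipalMinor
  apply Matrix.exists_mulVec_eq_zero_iff.mp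
  refine ⟨fun j => (-w) ^ (n - 2 - (j : ℕ)), ?_, ?_⟩
  · intro h
    have := congrFun h ⟨n - 2, by omega⟩
    simp at this
  · funext i
    -- the row sum is the telescoping sum of `T (j + 1) - T j`
    set T : ℕ → ℝ := fun j => b ((n : ℤ) - 1 - 2 * j + (i : ℕ)) * (-w) ^ (n - 1 - j) with hT
    have hi := i.2
    have hrow : ∀ j : Fin (n - 1),
        ((hurwitzMatrix n ((X ^ 2 + C w) * g)).submatrix (Fin.castLE (Nat.sub_le n 1))
          (Fin.castLE (Nat.sub_le n 1))) i j * (-w) ^ (n - 2 - (j : ℕ))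
          = T ((j : ℕ) + 1) - T (j : ℕ) := by
      intro j
      have hj := j.2
      simp only [Matrix.submatrix_apply, hurwitzMatrix, Fin.val_castLE, hT]
      rw [hentry]
      have e1 : n - 1 - (j : ℕ) = (n - 2 - (j : ℕ)) + 1 := by omega
      have e2 : n - 1 - ((j : ℕ) + 1) = n - 2 - (j : ℕ) := by omega
      have e3 : (n : ℤ) - 2 * (((j : ℕ) : ℤ) + 1) + (((i : ℕ) : ℤ) + 1)
          = (n : ℤ) - 1 - 2 * ((j : ℕ) : ℤ) + ((i : ℕ) : ℤ) := by ring
      have e4 : (n : ℤ) - 1 - 2 * ((((j : ℕ) + 1 : ℕ)) : ℤ) + ((i : ℕ) : ℤ)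
          = (n : ℤ) - 1 - 2 * ((j : ℕ) : ℤ) + ((i : ℕ) : ℤ) - 2 := by push_cast; ring
      rw [e1, e2, e3, e4]
      ring
    simp only [Matrix.mulVec, dotProduct, Pi.zero_apply]
    rw [Finset.sum_congr rfl (fun j _ => hrow j),
      Fin.sum_univ_eq_sum_range (fun j => T (j + 1) - T j), Finset.sum_range_sub]
    have h1 : T (n - 1) = 0 := by
      simp only [hT]
      rw [hbneg _ (by omega), zero_mul]
    have h0 : T 0 = 0 := by
      simp only [hT]
      rw [hbbig _ (by omega), zero_mul]
    rw [h1, h0, sub_zero]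

lemma isRoot_charpoly_iff {n : ℕ} (A : Matrix (Fin n) (Fin n) ℝ) (z : ℂ) :
    (A.charpoly.map (algebraMap ℝ ℂ)).IsRoot z ↔
      (Matrix.scalar (Fin n) z - A.map (algebraMap ℝ ℂ)).det = 0 := by
  rw [IsRoot.def, ← Matrix.charpoly_map, Matrix.eval_charpoly]

lemma continuous_det_sub (n : ℕ) :
    Continuous fun p : Matrix (Fin n) (Fin n) ℝ × ℂ =>
      (Matrix.scalar (Fin n) p.2 - p.1.map (algebraMap ℝ ℂ)).det := by
  apply Continuous.matrix_det
  refine Continuous.sub ?_ ?_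
  · simp only [Matrix.scalar_apply]
    exact Continuous.matrix_diagonal (continuous_pi fun _ => continuous_snd)
  · exact continuous_fst.matrix_map Complex.continuous_ofReal

open scoped Matrix.Norms.Operator in
/-- The unstable matrices form a closed set: eigenvalues are bounded by the norm, so eigenvalues in
the closed right half-plane along a convergent sequence of matrices have a cluster point. -/
lemma isOpen_stable (n : ℕ) : IsOpen {A : Matrix (Fin n) (Fin n) ℝ | IsHurwitzStable A} := by
  rw [← isClosed_compl_iff]
  have : SequentialSpace (Matrix (Fin n) (Fin n) ℝ) :=
    inferInstanceAs (SequentialSpace (Fin n → Fin n → ℝ))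
  apply IsSeqClosed.isClosed
  intro u A hu hlim
  have hex : ∀ k, ∃ z : ℂ, (Matrix.scalar (Fin n) z - (u k).map (algebraMap ℝ ℂ)).det = 0 ∧
      0 ≤ z.re := by
    intro k
    have := hu k
    simp only [Set.mem_compl_iff, Set.mem_ofPred_eq, IsHurwitzStable] at this
    push Not at this
    obtain ⟨z, hz, hz0⟩ := this
    exact ⟨z, (isRoot_charpoly_iff _ _).mp hz, hz0⟩
  choose z hz hz0 using hex
  have hmap : Filter.Tendsto (fun k => (u k).map (algebraMap ℝ ℂ)) Filter.atTop
      (nhds (A.map (algebraMap ℝ ℂ))) :=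
    ((continuous_id.matrix_map Complex.continuous_ofReal).tendsto A).comp hlim
  obtain ⟨R, hR⟩ := (Metric.isBounded_range_of_tendsto _ hmap).exists_norm_le
  have hbd : ∀ k, z k ∈ Metric.closedBall (0 : ℂ) (R * ‖(1 : Matrix (Fin n) (Fin n) ℂ)‖) := by
    intro k
    rw [mem_closedBall_zero_iff]
    have hmem : z k ∈ spectrum ℂ ((u k).map (algebraMap ℝ ℂ)) := by
      rw [Matrix.mem_spectrum_iff_isRoot_charpoly, IsRoot.def, Matrix.eval_charpoly]
      exact hz k
    exact (spectrum.norm_le_norm_mul_of_mem hmem).trans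
      (mul_le_mul_of_nonneg_right (hR _ ⟨k, rfl⟩) (norm_nonneg _))
  obtain ⟨ζ, -, φ, hφ, hζ⟩ := tendsto_subseq_of_bounded Metric.isBounded_closedBall hbd
  have hdet : (Matrix.scalar (Fin n) ζ - A.map (algebraMap ℝ ℂ)).det = 0 := by
    have h := ((continuous_det_sub n).tendsto (A, ζ)).comp
      ((hlim.comp hφ.tendsto_atTop).prodMk_nhds hζ)
    refine tendsto_nhds_unique h ?_
    refine tendsto_const_nhds.congr fun k => ?_
    exact (hz (φ k)).symm
  have hre : 0 ≤ ζ.re :=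
    ge_of_tendsto' ((Complex.continuous_re.tendsto ζ).comp hζ) fun k => hz0 (φ k)
  intro hst
  exact absurd (hst ζ ((isRoot_charpoly_iff _ _).mpr hdet)) (not_lt.mpr hre)

lemma pow_re_le_norm_prod (μ : ℂ) (hμ : 0 < μ.re) (s : Multiset ℂ) (hs : ∀ z ∈ s, z.re < 0) :
    μ.re ^ s.card ≤ ‖(s.map fun z => μ - z).prod‖ := by
  induction s using Multiset.induction_on with
  | empty => simp
  | cons a s ih =>
    rw [Multiset.card_cons, Multiset.map_cons, Multiset.prod_cons, norm_mul, pow_succ']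
    have ha := hs a (Multiset.mem_cons_self a s)
    have h1 : μ.re ≤ ‖μ - a‖ := by
      have := Complex.re_le_norm (μ - a)
      rw [Complex.sub_re] at this
      linarith
    exact mul_le_mul h1 (ih fun z hz => hs z (Multiset.mem_cons_of_mem hz)) (by positivity)
      (norm_nonneg _)

/-- The bound `|det (μ - A)| ≥ (Re μ) ^ n`, valid for stable `A`, passes to the closure, so limits of
stable matrices have no eigenvalue in the open right half-plane. -/
lemma closure_stable_subset (n : ℕ) (μ : ℂ) (hμ : 0 < μ.re) :
    closure {A : Matrix (Fin n) (Fin n) ℝ | IsHurwitzStable A} ⊆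
      {A | ¬ (A.charpoly.map (algebraMap ℝ ℂ)).IsRoot μ} := by
  have hcl : IsClosed {A : Matrix (Fin n) (Fin n) ℝ |
      μ.re ^ n ≤ ‖(Matrix.scalar (Fin n) μ - A.map (algebraMap ℝ ℂ)).det‖} :=
    isClosed_le continuous_const
      ((continuous_det_sub n).comp (continuous_id.prodMk continuous_const)).norm
  have hsub : {A : Matrix (Fin n) (Fin n) ℝ | IsHurwitzStable A} ⊆ {A |
      μ.re ^ n ≤ ‖(Matrix.scalar (Fin n) μ - A.map (algebraMap ℝ ℂ)).det‖} := by
    intro A hA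
    rw [Set.mem_ofPred_eq, ← Matrix.eval_charpoly, Matrix.charpoly_map]
    have hm : (A.charpoly.map (algebraMap ℝ ℂ)).Monic := A.charpoly_monic.map _
    have hs := IsAlgClosed.splits (A.charpoly.map (algebraMap ℝ ℂ))
    rw [hs.eval_eq_prod_roots_of_monic hm]
    have hcard : (A.charpoly.map (algebraMap ℝ ℂ)).roots.card = n := by
      rw [← hs.natDegree_eq_card_roots, A.charpoly_monic.natDegree_map,
        Matrix.charpoly_natDegree_eq_dim, Fintype.card_fin]
    have := pow_re_le_norm_prod μ hμ (A.charpoly.map (algebraMap ℝ ℂ)).roots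
      fun z hz => hA z (isRoot_of_mem_roots hz)
    rwa [hcard] at this
  intro A hA hroot
  have h := closure_minimal hsub hcl hA
  rw [Set.mem_ofPred_eq, (isRoot_charpoly_iff A μ).mp hroot, norm_zero] at h
  exact absurd h (not_le.mpr (by positivity))

/-- Positivity of `Δ_{n-1}` and `a₀` excludes eigenvalues on the imaginary axis. -/
lemma re_ne_zero_of_pos {n : ℕ} (A : Matrix (Fin n) (Fin n) ℝ)
    (h1 : 0 < leadingPrincipalMinor (hurwitzMatrix n A.charpoly) (n - 1) (Nat.sub_le n 1))
    (h0 : 0 < A.charpoly.coeff 0) (μ : ℂ)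
    (hμ : (A.charpoly.map (algebraMap ℝ ℂ)).IsRoot μ) : μ.re ≠ 0 := by
  intro hre
  have haev : aeval μ A.charpoly = 0 := by
    rw [aeval_def, ← eval_map]
    exact hμ
  by_cases him : μ.im = 0
  · have hz : μ = 0 := Complex.ext hre him
    rw [hz, ← coeff_zero_eq_aeval_zero', map_eq_zero] at haev
    exact h0.ne' haev
  · have hd := quadratic_dvd_of_aeval_eq_zero_im_ne_zero A.charpoly haev him
    rw [hre, mul_zero, C_0, zero_mul, sub_zero] at hd
    refine h1.ne' (hurwitz_minor_eq_zero n _ ?_ A.charpoly_monic.ne_zero _ hd)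
    rw [Matrix.charpoly_natDegree_eq_dim, Fintype.card_fin]

/-- If the polytope contains a Hurwitz stable matrix and `Δ_{n-1}(q) > 0`, `a₀(q) > 0`
for all `q` in the standard simplex, then every matrix in the polytope is Hurwitz stable. -/
theorem minors_pos_implies_polytope_stable (n m : ℕ) (A : Fin m → Matrix (Fin n) (Fin n) ℝ)
    (hex : ∃ q ∈ stdSimplex ℝ (Fin m), IsHurwitzStable (∑ k, q k • A k))
    (hpos : ∀ q ∈ stdSimplex ℝ (Fin m),
      0 < leadingPrincipalMinor (hurwitzMatrix n (∑ k, q k • A k).charpoly) (n - 1)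
            (Nat.sub_le n 1) ∧
      0 < ((∑ k, q k • A k).charpoly).coeff 0) :
    ∀ q ∈ stdSimplex ℝ (Fin m), IsHurwitzStable (∑ k, q k • A k) := by
  have hcont : Continuous fun q : Fin m → ℝ => ∑ k, q k • A k :=
    continuous_finsetSum _ fun k _ => (continuous_apply k).smul continuous_const
  have hconn : IsPreconnected (stdSimplex ℝ (Fin m)) := (convex_stdSimplex ℝ (Fin m)).isPreconnected
  obtain ⟨q₀, hq₀, hst₀⟩ := hex
  refine hconn.subset_of_closure_inter_subset
    (u := (fun q : Fin m → ℝ => ∑ k, q k • A k) ⁻¹' {B | IsHurwitzStable B})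
    ((isOpen_stable n).preimage hcont) ⟨q₀, hq₀, hst₀⟩ ?_
  rintro q ⟨hqcl, hq⟩ μ hμ
  have hcl := hcont.closure_preimage_subset _ hqcl
  rcases lt_trichotomy μ.re 0 with h | h | h
  · exact h
  · exact absurd h (re_ne_zero_of_pos _ (hpos q hq).1 (hpos q hq).2 μ hμ)
  · exact absurd hμ (closure_stable_subset n μ h hcl)
end

section
/- (Orlando's formula) Let $f$ be a monic real polynomial of degree $n \ge 2$ with complex roots $s_1,\ldots,s_n$ counted with multiplicity, and let $\Delta_{n-1}$ be the $(n-1)$-th leading principal minor of the Hurwitz matrix of $f$. Then, as complex numbers, $\Delta_{n-1} = (-1)^{n(n-1)/2} \prod_{1 \le i < j \le n} (s_i + s_j)$. -/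
/-!
Orlando's formula follows by peeling off one linear factor at a time.  Work with complex
coefficients and let `D_n(f)` be the `(n-1)`-th Hurwitz minor of a monic `f` of degree `n`.
The key identity is `D_{n+1}((X - s) f) = f(-s) D_n(f)` (`hurwitz_step`); since
`f(-s) = (-1)^n ∏ (s + s_i)`, induction on the number of roots gives the formula.

For the identity, the coefficients of `(X - s) f` are `a_{k-1} - s a_k`.  Replacing the last column
of its Hurwitz matrix by `∑_j s^{2(n-j)} col_j` makes entry `i` of that column equal to
`(-1)^{n+i} s^{n-i} f(-s)`: the even and odd coefficients of `f` interleave to an alternating sum.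
Adding `s` times row `i+1` to row `i` then clears the last column except for its bottom entry
`f(-s)`, and leaves in the remaining block the entries `a_{n-2j+i} - s² a_{n-2(j-1)+i}`, which
arise from the Hurwitz matrix of `f` by unipotent column operations.
-/

open Polynomial Matrix

/-- The coefficients of `f`, extended by zero to negative indices. -/
noncomputable def coeffZ (f : ℂ[X]) (e : ℤ) : ℂ := if 0 ≤ e then f.coeff e.toNat else 0

/-- The top-left `m × m` corner of the Hurwitz matrix of `f`, viewed as a polynomial of degree `n`;
the indices are `0`-based, so the entry `a_{n-2j+i}` of the `1`-based convention becomes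
`a_{n-1-2j+i}`. -/
noncomputable def hurwitzCorner (f : ℂ[X]) (n m : ℕ) : Matrix (Fin m) (Fin m) ℂ :=
  fun i j => coeffZ f ((n : ℤ) - 1 - 2 * (j : ℕ) + (i : ℕ))

lemma coeffZ_natCast (f : ℂ[X]) (k : ℕ) : coeffZ f (k : ℤ) = f.coeff k := by
  simp [coeffZ]

lemma coeffZ_of_neg (f : ℂ[X]) {e : ℤ} (he : e < 0) : coeffZ f e = 0 := by
  simp [coeffZ, he]

lemma coeffZ_of_natDegree_lt (f : ℂ[X]) {e : ℤ} (he : (f.natDegree : ℤ) < e) :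
    coeffZ f e = 0 := by
  lift e to ℕ using by omega
  rw [coeffZ_natCast]
  exact coeff_eq_zero_of_natDegree_lt (by omega)

lemma coeffZ_X_sub_C_mul (f : ℂ[X]) (s : ℂ) (e : ℤ) :
    coeffZ ((X - C s) * f) e = coeffZ f (e - 1) - s * coeffZ f e := by
  rcases lt_or_ge e 0 with he | he
  · rw [coeffZ_of_neg _ he, coeffZ_of_neg _ he, coeffZ_of_neg _ (by omega)]
    simp
  lift e to ℕ using he
  rcases e with _ | k
  · rw [coeffZ_of_neg f (e := ((0 : ℕ) : ℤ) - 1) (by simp), coeffZ_natCast, coeffZ_natCast]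
    simp [sub_mul]
  · have : (((k + 1 : ℕ) : ℤ) - 1) = (k : ℤ) := by push_cast; ring
    rw [this, coeffZ_natCast, coeffZ_natCast, coeffZ_natCast, sub_mul]
    simp

lemma sum_range_pairs (F : ℕ → ℂ) (k : ℕ) :
    ∑ j ∈ Finset.range k, (F (2 * j) + F (2 * j + 1)) = ∑ l ∈ Finset.range (2 * k), F l := by
  induction k with
  | zero => simp
  | succ k ih =>
    rw [Finset.sum_range_succ, ih, show 2 * (k + 1) = 2 * k + 1 + 1 by ring,
      Finset.sum_range_succ, Finset.sum_range_succ, add_assoc]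

/-- A window of coefficients, weighted by powers of `-s`, that covers all of `0, …, deg f`
evaluates `f` at `-s`; the window starts at index `-t`. -/
lemma sum_window (f : ℂ[X]) (s : ℂ) (t N : ℕ) (hN : f.natDegree + t < N) :
    ∑ l ∈ Finset.range N, (-s) ^ l * coeffZ f ((l : ℤ) - t) = (-s) ^ t * f.eval (-s) := by
  obtain ⟨M, rfl⟩ : ∃ M, N = t + M := ⟨N - t, by omega⟩
  rw [Finset.sum_range_add, Finset.sum_eq_zero, zero_add,
    eval_eq_sum_range' (n := M) (by omega), Finset.mul_sum]
  · refine Finset.sum_congr rfl fun l _ => ?_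
    rw [show ((t + l : ℕ) : ℤ) - t = (l : ℤ) by push_cast; ring, coeffZ_natCast]
    ring
  · intro l hl
    rw [coeffZ_of_neg _ (by have := Finset.mem_range.1 hl; omega), mul_zero]

/-- The entries of the last column after it is replaced by `∑_j s^{2(m-j)} col_j`. -/
lemma last_col (f : ℂ[X]) (s : ℂ) (m : ℕ) (hf : f.natDegree ≤ m + 1) (i : Fin (m + 1)) :
    ∑ j : Fin (m + 1), s ^ (2 * (m - (j : ℕ))) *
      hurwitzCorner ((X - C s) * f) (m + 2) (m + 1) i j = (-s) ^ (m - (i : ℕ)) * f.eval (-s) := by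
  have hi : (i : ℕ) ≤ m := by omega
  rw [← sum_window f s (m - i) (2 * (m + 1)) (by omega), ← sum_range_pairs,
    ← Finset.sum_range_reflect, ← Fin.sum_univ_eq_sum_range
      (fun j => (-s) ^ (2 * (m + 1 - 1 - j)) *
          coeffZ f (((2 * (m + 1 - 1 - j) : ℕ) : ℤ) - ((m - (i : ℕ) : ℕ) : ℤ)) +
        (-s) ^ (2 * (m + 1 - 1 - j) + 1) *
          coeffZ f (((2 * (m + 1 - 1 - j) + 1 : ℕ) : ℤ) - ((m - (i : ℕ) : ℕ) : ℤ)))]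
  refine Finset.sum_congr rfl fun j _ => ?_
  have hj : (j : ℕ) ≤ m := by omega
  rw [hurwitzCorner, coeffZ_X_sub_C_mul,
    show ((2 * (m + 1 - 1 - j) : ℕ) : ℤ) - ((m - (i : ℕ) : ℕ) : ℤ) =
      ((m + 2 : ℕ) : ℤ) - 1 - 2 * (j : ℕ) + (i : ℕ) - 1 by omega,
    show ((2 * (m + 1 - 1 - j) + 1 : ℕ) : ℤ) - ((m - (i : ℕ) : ℕ) : ℤ) =
      ((m + 2 : ℕ) : ℤ) - 1 - 2 * (j : ℕ) + (i : ℕ) by omega,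
    pow_succ, pow_mul, pow_mul, neg_sq, Nat.add_sub_cancel]
  ring

/-- Adding to each row `c` times the next one (the next row of the original matrix) preserves the
determinant. -/
lemma det_add_next_row {m : ℕ} (c : ℂ) (A B : Matrix (Fin (m + 1)) (Fin (m + 1)) ℂ)
    (hlast : ∀ j, B (Fin.last m) j = A (Fin.last m) j)
    (h : ∀ (i : Fin m) j, B i.castSucc j = A i.castSucc j + c * A i.succ j) :
    B.det = A.det := by
  rw [← det_submatrix_equiv_self Fin.revPerm A, ← det_submatrix_equiv_self Fin.revPerm B]
  symm
  refine det_eq_of_forall_row_eq_smul_add_pred (fun _ => -c) ?_ ?_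
  · intro j
    simp [hlast]
  · intro i j
    simp only [submatrix_apply, Fin.revPerm_apply, Fin.rev_succ, Fin.rev_castSucc, h]
    ring

/-- If the last column vanishes except for its bottom entry, expand along it. -/
lemma det_of_last_col {m : ℕ} (A : Matrix (Fin (m + 1)) (Fin (m + 1)) ℂ)
    (h : ∀ i : Fin m, A i.castSucc (Fin.last m) = 0) :
    A.det = A (Fin.last m) (Fin.last m) * (A.submatrix Fin.castSucc Fin.castSucc).det := by
  rw [det_succ_column A (Fin.last m), Fin.sum_univ_castSucc]
  simp [h, Fin.succAbove_last, ← two_mul]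

/-- Splitting off a linear factor `X - s` multiplies the Hurwitz minor by `f(-s)`. -/
lemma hurwitz_step (f : ℂ[X]) (s : ℂ) (m : ℕ) (hf : f.natDegree ≤ m + 1) :
    (hurwitzCorner ((X - C s) * f) (m + 2) (m + 1)).det =
      f.eval (-s) * (hurwitzCorner f (m + 1) m).det := by
  set G := hurwitzCorner ((X - C s) * f) (m + 2) (m + 1) with hG
  -- `G'` has the modified last column, `K` is obtained from it by the row operations.
  set G' := G.updateCol (Fin.last m)
    (fun k => ∑ j : Fin (m + 1), s ^ (2 * (m - (j : ℕ))) • G k j) with hG'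
  have hGdet : G'.det = G.det := by
    rw [hG', det_updateCol_sum]
    simp
  have hlast : ∀ i, G' i (Fin.last m) = (-s) ^ (m - (i : ℕ)) * f.eval (-s) := by
    intro i
    rw [hG', updateCol_self, ← last_col f s m hf i]
    rfl
  have hother : ∀ (i : Fin (m + 1)) (j : Fin m), G' i j.castSucc = G i j.castSucc := by
    intro i j
    rw [hG', updateCol_ne (Fin.castSucc_lt_last j).ne]
  let K : Matrix (Fin (m + 1)) (Fin (m + 1)) ℂ :=
    fun i j => Fin.lastCases (motive := fun _ => ℂ) (G' (Fin.last m) j)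
      (fun i => G' i.castSucc j + s * G' i.succ j) i
  have hKlast : ∀ j, K (Fin.last m) j = G' (Fin.last m) j := fun j => by simp [K]
  have hKcast : ∀ (i : Fin m) j, K i.castSucc j = G' i.castSucc j + s * G' i.succ j :=
    fun i j => by simp [K]
  rw [← hGdet, ← det_add_next_row s G' K hKlast hKcast, det_of_last_col K]
  · rw [hKlast, hlast]
    simp only [Fin.val_last, Nat.sub_self, pow_zero, one_mul]
    congr 1
    rcases m with _ | m
    · simp
    · symm
      refine det_eq_of_forall_col_eq_smul_add_pred (fun _ => s ^ 2) ?_ ?_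
      · intro i
        simp only [submatrix_apply]
        rw [hKcast, hother, hother, hG]
        simp only [hurwitzCorner, coeffZ_X_sub_C_mul]
        -- The column preceding the first one would only hold coefficients beyond the degree.
        rw [coeffZ_of_natDegree_lt f (e := ((m + 1 + 2 : ℕ) : ℤ) - 1 -
          2 * (((0 : Fin (m + 1)).castSucc : Fin (m + 2)) : ℕ) + (i.succ : ℕ))
          (by simp only [Fin.val_succ, Fin.val_castSucc, Fin.val_zero]; push_cast; omega)]
        simp only [Fin.val_succ, Fin.val_castSucc, Fin.val_zero]
        push_cast
        ring_nf
      · intro i j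
        simp only [submatrix_apply]
        rw [hKcast, hother, hother, hG]
        simp only [hurwitzCorner, coeffZ_X_sub_C_mul, Fin.val_succ, Fin.val_castSucc]
        push_cast
        ring_nf
  · intro i
    rw [hKcast, hlast, hlast]
    have : m - (i.castSucc : ℕ) = (m - (i.succ : ℕ)) + 1 := by
      simp only [Fin.val_succ, Fin.val_castSucc]; omega
    rw [this, pow_succ]
    ring

lemma natDegree_prod_roots (n : ℕ) (s : Fin n → ℂ) :
    (∏ i, (X - C (s i))).natDegree = n := by
  rw [natDegree_prod_of_monic _ _ fun i _ => monic_X_sub_C _]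
  simp

/-- Orlando's formula for complex polynomials of degree `m + 1`. -/
lemma orlando_complex (m : ℕ) (s : Fin (m + 1) → ℂ) :
    (hurwitzCorner (∏ i, (X - C (s i))) (m + 1) m).det =
      (-1) ^ ((m + 1) * m / 2) * ∏ i, ∏ j ∈ Finset.Ioi i, (s i + s j) := by
  induction m with
  | zero =>
    simp
  | succ m ih =>
    rw [Fin.prod_univ_succ (fun i => X - C (s i)),
      hurwitz_step _ _ _ (natDegree_prod_roots _ _).le, ih (fun i => s i.succ),
      Fin.prod_univ_succ (fun i => ∏ j ∈ Finset.Ioi i, (s i + s j)), eval_prod]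
    have h0 : ∏ i : Fin (m + 1), eval (-s 0) (X - C (s i.succ)) =
        (-1) ^ (m + 1) * ∏ j ∈ Finset.Ioi (0 : Fin (m + 2)), (s 0 + s j) := by
      rw [Fin.prod_Ioi_zero]
      have : ∀ i : Fin (m + 1), eval (-s 0) (X - C (s i.succ)) = -1 * (s 0 + s i.succ) := by
        intro i; simp; ring
      simp only [this, Finset.prod_mul_distrib]
      simp
    have he : (m + 1 + 1) * (m + 1) / 2 = (m + 1) + (m + 1) * m / 2 := by
      rw [show (m + 1 + 1) * (m + 1) = (m + 1) * m + (m + 1) * 2 by ring,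
        Nat.add_mul_div_right _ _ (by norm_num), add_comm]
    rw [h0, he, pow_add]
    simp only [Fin.prod_Ioi_succ]
    ring

/-- **Orlando's formula.** If `f` is a monic real polynomial of degree `n ≥ 2` whose
complex roots, counted with multiplicity, are `s 0, …, s (n-1)` (i.e. `f` factors over `ℂ`
as `∏ i, (X - C (s i))`), then the `(n-1)`-th leading principal minor of the Hurwitz
matrix of `f` equals `(-1)^(n(n-1)/2) ∏_{i < j} (s i + s j)`. -/
theorem orlando_formula (n : ℕ) (hn : 2 ≤ n) (f : Polynomial ℝ)
    (hmonic : f.Monic) (hdeg : f.natDegree = n) (s : Fin n → ℂ)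
    (hroots : f.map (algebraMap ℝ ℂ) = ∏ i, (X - C (s i))) :
    (leadingPrincipalMinor (hurwitzMatrix n f) (n - 1) (Nat.sub_le n 1) : ℂ) =
      (-1) ^ (n * (n - 1) / 2) * ∏ i, ∏ j ∈ Finset.Ioi i, (s i + s j) := by
  obtain ⟨m, rfl⟩ : ∃ m, n = m + 1 := ⟨n - 1, by omega⟩
  simp only [Nat.add_sub_cancel]
  rw [← orlando_complex m s, ← hroots, leadingPrincipalMinor,
    ← Complex.ofRealHom_eq_coe, RingHom.map_det]
  congr 1
  ext i j
  simp only [RingHom.mapMatrix_apply, map_apply, submatrix_apply, hurwitzMatrix, hurwitzCorner,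
    Fin.val_castLE]
  have he : ((m + 1 : ℕ) : ℤ) - 2 * (((j : ℕ) : ℤ) + 1) + (((i : ℕ) : ℤ) + 1) =
      ((m + 1 : ℕ) : ℤ) - 1 - 2 * ((j : ℕ) : ℤ) + ((i : ℕ) : ℤ) := by ring
  rw [he]
  generalize ((m + 1 : ℕ) : ℤ) - 1 - 2 * ((j : ℕ) : ℤ) + ((i : ℕ) : ℤ) = e
  split_ifs with h
  · rw [coeffZ, if_pos h.1, coeff_map]
    rfl
  · rw [map_zero]
    symm
    rcases lt_or_ge e 0 with h0 | h0
    · exact coeffZ_of_neg _ h0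
    · refine coeffZ_of_natDegree_lt _ ?_
      rw [natDegree_map, hdeg]
      omega
end

section
/- Let $A$ be a real $n\times n$ matrix ($n \ge 2$) with characteristic polynomial $f_A(s) = \det(sI_n - A)$, and let $\Delta_{n-1}$ denote the $(n-1)$-th leading principal minor of the Hurwitz matrix of $f_A$. If $A$ has a nonzero purely imaginary eigenvalue $i\omega$ (with $\omega \in \mathbb{R}$, $\omega \ne 0$), then $\Delta_{n-1} = 0$. -/
/-!
Write `z = iω`. The characteristic polynomial `f` is real and vanishes at `z`, hence also at `-z`,
so the even and the odd part of `f` both vanish at `z` (`parity_part_eq_zero`). Within one row of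
the Hurwitz matrix the column index moves the coefficient index in steps of two, and the first
`n - 1` columns already meet every coefficient of the parity belonging to any of the first `n - 1`
rows. Thus each row, paired with the vector `v_j = z ^ (2 (n - 1 - j)) = (-ω²) ^ (n - 1 - j)`
(`0`-based `j`), gives a power of `z` times the even or the odd part of `f` at `z`, which is zero.
As `v ≠ 0`, the leading `(n - 1) × (n - 1)` block is singular.
-/

open Polynomial Matrix

/-- If `∑ c_e z^e` vanishes at both `z` and `-z`, then so does its part of either parity: the terms
with `e + p` odd have weight `0` here, the others weight `2`. -/
lemma parity_part_eq_zero (N p : ℕ) (c : ℕ → ℂ) (z : ℂ)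
    (h₁ : ∑ e ∈ Finset.range N, c e * z ^ e = 0)
    (h₂ : ∑ e ∈ Finset.range N, c e * (-z) ^ e = 0) :
    ∑ e ∈ Finset.range N, c e * ((1 + (-1) ^ (e + p)) * z ^ e) = 0 := by
  have h : ∑ e ∈ Finset.range N, c e * ((1 + (-1) ^ (e + p)) * z ^ e)
      = ∑ e ∈ Finset.range N, c e * z ^ e
        + (-1) ^ p * ∑ e ∈ Finset.range N, c e * (-z) ^ e := by
    rw [Finset.mul_sum, ← Finset.sum_add_distrib]
    refine Finset.sum_congr rfl fun e _ => ?_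
    rw [neg_pow z e, pow_add]
    ring
  rw [h, h₁, h₂]
  simp

lemma hurwitzMatrix_apply_eq_sum (n : ℕ) (f : Polynomial ℝ) (i j : Fin n) :
    hurwitzMatrix n f i j
      = ∑ e ∈ Finset.range (n + 1),
          if e + 2 * (j : ℕ) + 1 = n + (i : ℕ) then f.coeff e else 0 := by
  unfold hurwitzMatrix
  dsimp only
  split_ifs with h
  · rw [Finset.sum_eq_single
      ((n : ℤ) - 2 * (((j : ℕ) : ℤ) + 1) + (((i : ℕ) : ℤ) + 1)).toNat]
    · rw [if_pos (by omega)]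
    · intro e _ he
      rw [if_neg (by omega)]
    · intro he
      rw [Finset.mem_range] at he
      omega
  · symm
    refine Finset.sum_eq_zero fun e he => ?_
    rw [Finset.mem_range] at he
    rw [if_neg (by omega)]

/-- For a fixed row `i` and coefficient index `e`, at most one column `j < m` carries the
coefficient `e`, and one does exactly when `e` has the parity of `m + i`. -/
lemma sum_column_weights (m i e : ℕ) (hi : i < m) (he : e ≤ m + 1) (z : ℂ) :
    2 * ∑ j : Fin m, (if e + 2 * (j : ℕ) + 1 = m + 1 + i then z ^ (2 * (m - (j : ℕ))) else 0)
      = (1 + (-1) ^ (e + (m + i))) * z ^ e * z ^ (m - i) := by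
  rcases Nat.even_or_odd (e + (m + i)) with hp | hp
  · obtain ⟨k, hk⟩ := hp
    have hj : m + i - k < m := by omega
    rw [Finset.sum_eq_single (⟨m + i - k, hj⟩ : Fin m)]
    · rw [if_pos (by simp only; omega), Even.neg_one_pow ⟨k, hk⟩, mul_assoc, ← pow_add]
      have : 2 * (m - (m + i - k)) = e + (m - i) := by omega
      simp only [this]
      ring
    · intro j _ hne
      have : (j : ℕ) ≠ m + i - k := fun h => hne (Fin.ext h)
      rw [if_neg (by omega)]
    · simp
  · rw [hp.neg_one_pow, Finset.sum_eq_zero]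
    · simp
    · intro j _
      obtain ⟨k, hk⟩ := hp
      rw [if_neg (by omega)]

/-- If a real `n × n` matrix (`n ≥ 2`) has a nonzero purely imaginary eigenvalue `iω`,
then the `(n-1)`-th leading principal minor of the Hurwitz matrix of its characteristic
polynomial vanishes. -/
theorem delta_eq_zero_of_imaginary_eigenvalue (n : ℕ) (hn : 2 ≤ n)
    (A : Matrix (Fin n) (Fin n) ℝ) (ω : ℝ) (hω : ω ≠ 0)
    (heig : ((A.charpoly).map (algebraMap ℝ ℂ)).IsRoot (Complex.I * ω)) :
    leadingPrincipalMinor (hurwitzMatrix n A.charpoly) (n - 1) (Nat.sub_le n 1) = 0 := by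
  obtain ⟨m, rfl⟩ : ∃ m, n = m + 1 := ⟨n - 1, by omega⟩
  have hdeg : A.charpoly.natDegree = m + 1 := by simp
  generalize A.charpoly = f at heig hdeg
  set z : ℂ := Complex.I * ω with hz
  have hsum (x : ℂ) : (f.map (algebraMap ℝ ℂ)).eval x
      = ∑ e ∈ Finset.range (m + 1 + 1), (f.coeff e : ℂ) * x ^ e := by
    rw [Polynomial.eval_map, Polynomial.eval₂_eq_sum_range, hdeg]
    rfl
  have h₁ : ∑ e ∈ Finset.range (m + 1 + 1), (f.coeff e : ℂ) * z ^ e = 0 := by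
    rw [← hsum]
    exact heig
  have h₂ : ∑ e ∈ Finset.range (m + 1 + 1), (f.coeff e : ℂ) * (-z) ^ e = 0 := by
    -- `-z` is the complex conjugate of `z`, and the coefficients are real
    have := congrArg (starRingEnd ℂ) h₁
    simpa [map_sum, hz] using this
  unfold leadingPrincipalMinor
  refine Matrix.exists_mulVec_eq_zero_iff.mp
    ⟨fun j : Fin m => (-ω ^ 2) ^ (m - (j : ℕ)), fun h0 => ?_, ?_⟩
  · have := congrFun h0 ⟨0, by omega⟩
    exact pow_ne_zero _ (neg_ne_zero.mpr (pow_ne_zero 2 hω)) this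
  · ext i
    have hz2 (k : ℕ) : (((-ω ^ 2) ^ k : ℝ) : ℂ) = z ^ (2 * k) := by
      rw [pow_mul, hz, mul_pow, Complex.I_sq]
      push_cast
      ring
    rw [← Complex.ofReal_inj, ← mul_right_inj' (two_ne_zero (α := ℂ))]
    calc (2 : ℂ) * ((((hurwitzMatrix (m + 1) f).submatrix (Fin.castLE (Nat.sub_le (m + 1) 1))
            (Fin.castLE (Nat.sub_le (m + 1) 1))) *ᵥ
              fun j : Fin m => (-ω ^ 2) ^ (m - (j : ℕ))) i : ℝ)
        = 2 * ∑ j : Fin m, ∑ e ∈ Finset.range (m + 1 + 1), (f.coeff e : ℂ) *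
            (if e + 2 * (j : ℕ) + 1 = m + 1 + (i : ℕ) then z ^ (2 * (m - (j : ℕ))) else 0) := by
          congr 1
          simp only [Matrix.mulVec, dotProduct, Matrix.submatrix_apply,
            hurwitzMatrix_apply_eq_sum, Complex.ofReal_sum]
          refine Finset.sum_congr rfl fun j _ => ?_
          rw [Complex.ofReal_mul, hz2, Complex.ofReal_sum, Finset.sum_mul]
          refine Finset.sum_congr rfl fun e _ => ?_
          simp only [Fin.val_castLE]
          split_ifs <;> simp
      _ = (∑ e ∈ Finset.range (m + 1 + 1), (f.coeff e : ℂ) *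
            ((1 + (-1) ^ (e + (m + (i : ℕ)))) * z ^ e)) * z ^ (m - (i : ℕ)) := by
          rw [Finset.sum_comm, Finset.mul_sum, Finset.sum_mul]
          refine Finset.sum_congr rfl fun e he => ?_
          rw [Finset.mem_range] at he
          rw [← Finset.mul_sum, mul_left_comm, sum_column_weights m i e i.isLt (by omega) z]
          ring
      _ = 2 * (((0 : Fin m → ℝ) i : ℝ) : ℂ) := by
          rw [parity_part_eq_zero _ _ _ _ h₁ h₂]
          simp
end

section
/- Let $T_m$ be the $m\times m$ real matrix with $(i,j)$ entry equal to $1/j$ if $i \le j$ and $0$ otherwise, and for each permutation $\theta$ of $\{1,\ldots,m\}$ with permutation matrix $P_\theta$ set $A_\theta = P_\theta T_m$. Then the images of the standard simplex under the matrices $A_\theta$ cover the simplex: for every $x \in S_m$ there exist a permutation $\theta$ and $y \in S_m$ such that $x = A_\theta y$. Consequently $S_m = \bigcup_{\theta} A_\theta(S_m)$. -/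
/-!
Sort the coordinates of `x` decreasingly as `z 0 ≥ z 1 ≥ … ≥ z (m - 1)` and put `z k = 0` for
`k ≥ m`. The vector `y j = (j + 1) (z j - z (j + 1))` is nonnegative, and `T_m y = z` because
the rows of `T_m` turn into telescoping sums (`sum_tail_telescope`). Summation by parts
(`sum_weighted_diff`) shows that `y` has the same coordinate sum as `z`, namely `1`. Taking `θ`
to be the inverse of the sorting permutation then gives `A_θ y = x`.
-/


open Matrix

/-- The upper-triangular matrix `T_m` whose `(i,j)` entry (with `1`-based indices)
is `1/j` when `i ≤ j` and `0` otherwise. -/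
noncomputable def Tmat (m : ℕ) : Matrix (Fin m) (Fin m) ℝ :=
  fun i j => if i ≤ j then 1 / ((j : ℕ) + 1) else 0

/-- The permutation matrix of `θ`: its `(i,j)` entry is `1` if `j = θ i` and `0` otherwise. -/
def permMat {m : ℕ} (θ : Equiv.Perm (Fin m)) : Matrix (Fin m) (Fin m) ℝ :=
  fun i j => if θ i = j then 1 else 0

/-- The weighted difference substitution (WDS) matrix `A_θ = P_θ T_m`. -/
noncomputable def WDSmat {m : ℕ} (θ : Equiv.Perm (Fin m)) : Matrix (Fin m) (Fin m) ℝ :=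
  permMat θ * Tmat m

lemma sum_tail_telescope (z : ℕ → ℝ) (i n : ℕ) :
    ∑ j ∈ Finset.range n, (if i ≤ j then z j - z (j + 1) else 0) =
      if i ≤ n then z i - z n else 0 := by
  induction n with
  | zero =>
    rcases Nat.eq_zero_or_pos i with h | h
    · simp [h]
    · simp [h.ne']
  | succ n ih =>
    rw [Finset.sum_range_succ, ih]
    rcases lt_trichotomy i (n + 1) with h | h | h
    · have h1 : i ≤ n := by omega
      have h2 : i ≤ n + 1 := by omega
      simp [h1, h2]
    · simp [h]
    · have h1 : ¬ i ≤ n := by omega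
      have h2 : ¬ i ≤ n + 1 := by omega
      simp [h1, h2]

lemma sum_weighted_diff (z : ℕ → ℝ) (n : ℕ) :
    ∑ j ∈ Finset.range n, ((j : ℝ) + 1) * (z j - z (j + 1)) =
      ∑ j ∈ Finset.range n, z j - n * z n := by
  induction n with
  | zero => simp
  | succ n ih =>
    rw [Finset.sum_range_succ, ih, Finset.sum_range_succ]
    push_cast
    ring

lemma WDSmat_apply {m : ℕ} (θ : Equiv.Perm (Fin m)) (i j : Fin m) :
    WDSmat θ i j = Tmat m (θ i) j := by
  simp [WDSmat, permMat, Matrix.mul_apply]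

/-- The images of the standard simplex under the WDS matrices cover the simplex:
every `x ∈ S_m` is of the form `A_θ y` for some permutation `θ` and some `y ∈ S_m`. -/
theorem wds_images_cover_simplex (m : ℕ) (x : Fin m → ℝ)
    (hx : x ∈ stdSimplex ℝ (Fin m)) :
    ∃ θ : Equiv.Perm (Fin m), ∃ y ∈ stdSimplex ℝ (Fin m), x = (WDSmat θ).mulVec y := by
  obtain ⟨hx0, hx1⟩ := hx
  -- Sorting `-x` increasingly sorts `x` decreasingly.
  set σ := Tuple.sort (fun i => -x i) with hσ
  have hanti : ∀ a b : Fin m, a ≤ b → x (σ b) ≤ x (σ a) := by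
    intro a b hab
    have h := Tuple.monotone_sort (fun i => -x i) hab
    simpa [← hσ] using h
  let z : ℕ → ℝ := fun k => if h : k < m then x (σ ⟨k, h⟩) else 0
  have hz : ∀ k : Fin m, z k = x (σ k) := fun k => by simp [z]
  have hzm : z m = 0 := by simp [z]
  have hdiff : ∀ k, k < m → 0 ≤ z k - z (k + 1) := by
    intro k hk
    by_cases h : k + 1 < m
    · simp only [z, hk, h, dite_true, sub_nonneg]
      exact hanti _ _ (by simp)
    · simp only [z, hk, h, dite_true, dite_false, sub_zero]
      exact hx0 _
  refine ⟨σ⁻¹, fun j => ((j : ℕ) + 1 : ℝ) * (z j - z (j + 1)), ⟨?_, ?_⟩, ?_⟩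
  · intro j
    exact mul_nonneg (by positivity) (hdiff j j.2)
  · rw [Fin.sum_univ_eq_sum_range (fun j : ℕ => ((j : ℝ) + 1) * (z j - z (j + 1))) m,
      sum_weighted_diff, hzm, mul_zero, sub_zero, ← Fin.sum_univ_eq_sum_range]
    simp only [hz]
    rw [Equiv.sum_comp σ x, hx1]
  · funext i
    have hterm : ∀ j : Fin m,
        WDSmat σ⁻¹ i j * (((j : ℕ) + 1 : ℝ) * (z j - z (j + 1))) =
          if ((σ⁻¹ i : Fin m) : ℕ) ≤ (j : ℕ) then z j - z (j + 1) else 0 := by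
      intro j
      rw [WDSmat_apply]
      have hj : ((j : ℕ) : ℝ) + 1 ≠ 0 := by positivity
      by_cases h : σ⁻¹ i ≤ j
      · have h' : ((σ⁻¹ i : Fin m) : ℕ) ≤ (j : ℕ) := h
        simp only [Tmat, if_pos h, if_pos h']
        field_simp
      · have h' : ¬ ((σ⁻¹ i : Fin m) : ℕ) ≤ (j : ℕ) := h
        simp only [Tmat, if_neg h, if_neg h', zero_mul]
    simp only [Matrix.mulVec, dotProduct, hterm]
    rw [Fin.sum_univ_eq_sum_range
        (fun j : ℕ => if ((σ⁻¹ i : Fin m) : ℕ) ≤ j then z j - z (j + 1) else 0) m,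
      sum_tail_telescope, if_pos (σ⁻¹ i).2.le, hzm, sub_zero, hz]
    simp
end

section
/- Let $f \in \mathbb{R}[x_1,\ldots,x_m]$ be a homogeneous polynomial of degree $d$, and let $k$ be a nonnegative integer. Suppose that for every sequence $\theta_1,\ldots,\theta_k$ of permutations of $\{1,\ldots,m\}$, the polynomial $g(\mathbf{y}) = f(A_{\theta_k}\cdots A_{\theta_1}\mathbf{y})$ has strictly positive coefficient on every monomial of total degree $d$ in $y_1,\ldots,y_m$ (i.e., $g$ has complete monomials with all positive coefficients). Then $f(x) > 0$ for all $x \in S_m$. -/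
/-!
Sorting the coordinates of a nonnegative vector `x` decreasingly and taking weighted
consecutive differences writes `x = A_θ y` with `y` nonnegative (`exists_WDSmat_mulVec`).
Iterating, the images of the nonnegative orthant under the `k`-fold products of WDS matrices
cover the orthant (`exists_WDSprod_mulVec`). So a point `x` of the simplex is `B y` for such a
product `B` and some `y ≥ 0`, where `y ≠ 0` because `x ≠ 0`. Then `f x = g y` with
`g = linSubst B f`, a form of degree `d` all of whose coefficients are positive; if `y i > 0`
then the monomial `y i ^ d` makes `g y` positive, the other terms being nonnegative.
-/

open Matrix

/-- Substitution of the linear change of variables `x = B y` into a multivariate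
polynomial: each variable `xᵢ` is replaced by `∑ⱼ B i j * yⱼ`. -/
noncomputable def linSubst {m : ℕ} (B : Matrix (Fin m) (Fin m) ℝ)
    (f : MvPolynomial (Fin m) ℝ) : MvPolynomial (Fin m) ℝ :=
  MvPolynomial.bind₁ (fun i => ∑ j, MvPolynomial.C (B i j) * MvPolynomial.X j) f

/-- The product `A_{θ k} ⋯ A_{θ 1}` of the WDS matrices of a sequence of permutations. -/
noncomputable def WDSprod {m k : ℕ} (θ : Fin k → Equiv.Perm (Fin m)) :
    Matrix (Fin m) (Fin m) ℝ :=
  (List.ofFn fun i => WDSmat (θ i)).prod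

lemma eval_linSubst {m : ℕ} (B : Matrix (Fin m) (Fin m) ℝ) (f : MvPolynomial (Fin m) ℝ)
    (y : Fin m → ℝ) :
    MvPolynomial.eval y (linSubst B f) = MvPolynomial.eval (B *ᵥ y) f := by
  unfold linSubst
  rw [← MvPolynomial.coe_aeval_eq_eval, RingHom.coe_coe, MvPolynomial.aeval_bind₁,
    ← MvPolynomial.coe_aeval_eq_eval, RingHom.coe_coe]
  congr 2
  funext i
  simp [Matrix.mulVec, dotProduct]

lemma linSubst_isHomogeneous {m d : ℕ} (B : Matrix (Fin m) (Fin m) ℝ)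
    {f : MvPolynomial (Fin m) ℝ} (hf : f.IsHomogeneous d) :
    (linSubst B f).IsHomogeneous d := by
  have := hf.aeval (fun i => ∑ j, MvPolynomial.C (B i j) * MvPolynomial.X j) (n := 1)
    (fun i => MvPolynomial.IsHomogeneous.sum _ _ _ fun j _ =>
      MvPolynomial.isHomogeneous_C_mul_X _ _)
  rwa [one_mul] at this

lemma permMat_mulVec {m : ℕ} (θ : Equiv.Perm (Fin m)) (v : Fin m → ℝ) :
    permMat θ *ᵥ v = v ∘ θ := by
  funext i
  simp [permMat, Matrix.mulVec, dotProduct]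

/-- An antitone nonnegative vector `z` is `T_m y` for the nonnegative vector
`y_j = j (z_j - z_{j+1})` (`1`-based, with `z_{m+1} = 0`). -/
lemma exists_Tmat_mulVec {m : ℕ} (z : Fin m → ℝ) (hz : ∀ i, 0 ≤ z i) (ha : Antitone z) :
    ∃ y : Fin m → ℝ, (∀ i, 0 ≤ y i) ∧ Tmat m *ᵥ y = z := by
  -- `Z` extends `z` by zero beyond the last index.
  let Z : ℕ → ℝ := fun n => if h : n < m then z ⟨n, h⟩ else 0
  refine ⟨fun j => ((j : ℕ) + 1) * (Z j - Z (j + 1)), fun j => ?_, ?_⟩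
  · refine mul_nonneg (by positivity) (sub_nonneg.2 ?_)
    by_cases h : (j : ℕ) + 1 < m
    · simp only [Z, h, j.2, dif_pos]
      exact ha (by simp [Fin.le_def])
    · simp only [Z, h, j.2, dif_pos, dif_neg, not_false_eq_true]
      exact hz _
  · funext i
    have tele : ∀ n, (i : ℕ) ≤ n →
        ∑ j ∈ Finset.range n, (if (i : ℕ) ≤ j then Z j - Z (j + 1) else 0) = Z i - Z n := by
      intro n hn
      induction n, hn using Nat.le_induction with
      | base =>
        rw [sub_self]
        refine Finset.sum_eq_zero fun j hj => if_neg ?_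
        simpa using hj
      | succ n hn ih =>
        rw [Finset.sum_range_succ, ih, if_pos hn]
        ring
    have h1 := tele m i.2.le
    rw [← Fin.sum_univ_eq_sum_range
      (fun j => if (i : ℕ) ≤ j then Z j - Z (j + 1) else 0)] at h1
    have h2 : Z i - Z m = z i := by simp [Z]
    rw [← h2, ← h1, Matrix.mulVec, dotProduct]
    refine Finset.sum_congr rfl fun j _ => ?_
    simp only [Tmat, Fin.le_def]
    split_ifs
    · have : ((j : ℕ) : ℝ) + 1 ≠ 0 := by positivity
      field_simp
    · simp

lemma exists_WDSmat_mulVec {m : ℕ} (x : Fin m → ℝ) (hx : ∀ i, 0 ≤ x i) :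
    ∃ (θ : Equiv.Perm (Fin m)) (y : Fin m → ℝ), (∀ i, 0 ≤ y i) ∧ WDSmat θ *ᵥ y = x := by
  -- Sorting `-x` increasingly sorts `x` decreasingly.
  let σ := Tuple.sort (-x)
  have hσ : Antitone (x ∘ σ) := fun a b hab => by
    have := Tuple.monotone_sort (-x) hab
    simpa using this
  obtain ⟨y, hy, hyx⟩ := exists_Tmat_mulVec (x ∘ σ) (fun i => hx _) hσ
  refine ⟨σ⁻¹, y, hy, ?_⟩
  rw [WDSmat, ← Matrix.mulVec_mulVec, hyx, permMat_mulVec]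
  funext i
  simp

lemma exists_WDSprod_mulVec {m : ℕ} (k : ℕ) (x : Fin m → ℝ) (hx : ∀ i, 0 ≤ x i) :
    ∃ (θ : Fin k → Equiv.Perm (Fin m)) (y : Fin m → ℝ),
      (∀ i, 0 ≤ y i) ∧ WDSprod θ *ᵥ y = x := by
  induction k generalizing x with
  | zero => exact ⟨Fin.elim0, x, hx, by simp [WDSprod]⟩
  | succ k ih =>
    obtain ⟨θ₀, y₀, hy₀, h₀⟩ := exists_WDSmat_mulVec x hx
    obtain ⟨θ, y, hy, h⟩ := ih y₀ hy₀
    refine ⟨Fin.cons θ₀ θ, y, hy, ?_⟩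
    have hp : WDSprod (Fin.cons θ₀ θ : Fin (k + 1) → Equiv.Perm (Fin m))
        = WDSmat θ₀ * WDSprod θ := by
      simp [WDSprod, List.ofFn_succ]
    rw [hp, ← Matrix.mulVec_mulVec, h, h₀]

lemma eval_pos_of_coeff_pos {m d : ℕ} {g : MvPolynomial (Fin m) ℝ} (hg : g.IsHomogeneous d)
    (h : ∀ α : Fin m →₀ ℕ, (∑ i, α i) = d → 0 < MvPolynomial.coeff α g)
    (y : Fin m → ℝ) (hy : ∀ i, 0 ≤ y i) {i : Fin m} (hi : 0 < y i) :
    0 < MvPolynomial.eval y g := by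
  rw [MvPolynomial.eval_eq]
  have hc := h (Finsupp.single i d) (by simp [Finsupp.single_apply])
  refine Finset.sum_pos' (fun α hα => ?_)
    ⟨Finsupp.single i d, MvPolynomial.mem_support_iff.2 hc.ne', mul_pos hc ?_⟩
  · have hα' : ∑ j, α j = d := by
      rw [← hg (MvPolynomial.mem_support_iff.1 hα), Finsupp.weight_apply,
        Finsupp.sum_fintype _ _ (by simp)]
      simp
    exact mul_nonneg (h α hα').le (Finset.prod_nonneg fun j _ => pow_nonneg (hy j) _)
  · refine Finset.prod_pos fun j hj => ?_
    have : j = i := by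
      simpa using Finsupp.support_single_subset hj
    subst this
    exact pow_pos hi _

/-- If after `k` steps of weighted difference substitutions every resulting form has
complete monomials with all positive coefficients, then the homogeneous polynomial `f`
of degree `d` is positive on the standard simplex. -/
theorem pos_on_simplex_of_wds_pos_coeffs (m d k : ℕ) (f : MvPolynomial (Fin m) ℝ)
    (hf : f.IsHomogeneous d)
    (h : ∀ θ : Fin k → Equiv.Perm (Fin m), ∀ α : Fin m →₀ ℕ, (∑ i, α i) = d →
      0 < MvPolynomial.coeff α (linSubst (WDSprod θ) f)) :
    ∀ x ∈ stdSimplex ℝ (Fin m), 0 < MvPolynomial.eval x f := by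
  intro x hx
  obtain ⟨θ, y, hy, hyx⟩ := exists_WDSprod_mulVec k x hx.1
  have hpos : ∃ i, 0 < y i := by
    by_contra! hcon
    have hy0 : y = 0 := funext fun i => le_antisymm (hcon i) (hy i)
    have hs := hx.2
    rw [← hyx, hy0, Matrix.mulVec_zero] at hs
    simp at hs
  obtain ⟨i, hi⟩ := hpos
  rw [← hyx, ← eval_linSubst]
  exact eval_pos_of_coeff_pos (linSubst_isHomogeneous _ hf) (h θ) y hy hi
end
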